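/- arXiv:1711.01492 — 5 statements merged into one kernel-verified Lean document; each statement's English description precedes it below -/
import Mathlib

section
/- In a triangulated category with countable direct sums, every idempotent endomorphism of an object splits (i.e. the category is Karoubian/idempotent complete). -/
open CategoryTheory CategoryTheory.Limits CategoryTheory.Pretriangulated

section Telescope

variable {C : Type u} [Category.{v} C] [Preadditive C] [HasCountableCoproducts C]
  {X : C} (e : X ⟶ X)

/-- The map `1 - shift` on `∐ X` whose cone is the homotopy colimit of
`X ⟶ X ⟶ X ⟶ ⋯` along `e`. -/
noncomputable def telescopeMap : (∐ fun _ : ℕ => X) ⟶ ∐ fun _ : ℕ => X :=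
  Sigma.desc fun n => Sigma.ι (fun _ : ℕ => X) n - e ≫ Sigma.ι (fun _ : ℕ => X) (n + 1)

lemma ι_telescopeMap_comp {Z : C} (f : (∐ fun _ : ℕ => X) ⟶ Z) (n : ℕ) :
    Sigma.ι (fun _ : ℕ => X) n ≫ telescopeMap e ≫ f =
      Sigma.ι (fun _ : ℕ => X) n ≫ f - e ≫ Sigma.ι (fun _ : ℕ => X) (n + 1) ≫ f := by
  simp [telescopeMap, Preadditive.sub_comp]

variable {e} in
lemma isSplitMono_telescopeMap (he : e ≫ e = e) : IsSplitMono (telescopeMap e) := by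
  have he' {Z : C} (f : X ⟶ Z) : e ≫ e ≫ f = e ≫ f := by rw [← Category.assoc, he]
  refine IsSplitMono.mk' ⟨Sigma.desc fun n => Sigma.ι (fun _ : ℕ => X) n -
    e ≫ ∑ k ∈ Finset.range (n + 1), Sigma.ι (fun _ : ℕ => X) k, ?_⟩
  refine Sigma.hom_ext _ _ fun n => ?_
  rw [ι_telescopeMap_comp]
  simp [Finset.sum_range_succ, he', Preadditive.comp_add, Preadditive.comp_sub]
  abel

end Telescope

/-- A triangulated category with countable direct sums is Karoubian:
every idempotent splits. -/
theorem isIdempotentComplete_of_hasCountableCoproducts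
    (C : Type u) [Category.{v} C] [Preadditive C] [HasZeroObject C]
    [HasShift C ℤ] [∀ n : ℤ, (shiftFunctor C n).Additive] [Pretriangulated C]
    [HasCountableCoproducts C] :
    IsIdempotentComplete C := by
  refine ⟨fun X e he => ?_⟩
  have he' {Z : C} (f : X ⟶ Z) : e ≫ e ≫ f = e ≫ f := by rw [← Category.assoc, he]
  have := isSplitMono_telescopeMap he
  obtain ⟨Y, π, δ, hT⟩ := distinguished_cocone_triangle (telescopeMap e)
  have hπ : telescopeMap e ≫ π = 0 := comp_distTriang_mor_zero₁₂ _ hT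
  have : Epi π := Triangle.epi₂ _ hT (Triangle.mor₃_eq_zero_of_mono₁ _ hT
    (inferInstanceAs (Mono (telescopeMap e))))
  have hι (n : ℕ) : Sigma.ι (fun _ : ℕ => X) n ≫ π =
      e ≫ Sigma.ι (fun _ : ℕ => X) (n + 1) ≫ π := by
    rw [← sub_eq_zero, ← ι_telescopeMap_comp, hπ, comp_zero]
  have hι₀ (n : ℕ) : e ≫ Sigma.ι (fun _ : ℕ => X) 0 ≫ π = Sigma.ι (fun _ : ℕ => X) n ≫ π := by
    induction n with
    | zero => rw [hι, he']
    | succ n ih => rw [ih, hι n, hι (n + 1), he']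
  have hq : telescopeMap e ≫ Sigma.desc (fun _ : ℕ => e) = 0 :=
    Sigma.hom_ext _ _ fun n => by rw [ι_telescopeMap_comp]; simp [he]
  obtain ⟨i, hi⟩ : ∃ i : Y ⟶ X, Sigma.desc (fun _ : ℕ => e) = π ≫ i :=
    Triangle.yoneda_exact₂ _ hT _ hq
  refine ⟨Y, i, Sigma.ι (fun _ : ℕ => X) 0 ≫ π, ?_, by simp [← hi]⟩
  rw [← cancel_epi π, ← Category.assoc, ← hi, Category.comp_id]
  exact Sigma.hom_ext _ _ fun n => by simpa using hι₀ n
end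

section
/- Let R be a commutative Noetherian ring, f ∈ R, and M an R-module with M ∈_f ⟨R⟩_n in D(R-Mod) (i.e. there is M' and a triangle P → M ⊕ M' → C with P ∈ [R]_n and f·C = 0 in the derived category). Then f · Ext^m_R(M,N) = 0 for every R-module N and every m > n. -/
open CategoryTheory CategoryTheory.Limits CategoryTheory.Pretriangulated

universe v u

variable {C : Type u} [Category.{v} C] [Preadditive C] [HasZeroObject C]
  [HasShift C ℤ] [∀ n : ℤ, (shiftFunctor C n).Additive] [Pretriangulated C]

/-- The objects of `[G]₀`: finite direct sums of shifts of `G` (up to isomorphism). -/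
inductive GenZero (G : C) : C → Prop
  | shift (n : ℤ) (X : C) : Nonempty (X ≅ (shiftFunctor C n).obj G) → GenZero G X
  | zero (X : C) : IsZero X → GenZero G X
  | sum {X Y : C} (Z : C) (b : BinaryBicone X Y) :
      Nonempty b.IsBilimit → Nonempty (Z ≅ b.pt) →
      GenZero G X → GenZero G Y → GenZero G Z

/-- The objects of `[G]ₙ`: objects obtained from `G` in `n` cone-steps, i.e. `F ∈ [G]ₖ`
iff there is a distinguished triangle `F_{k-1} → F → F₀ → F_{k-1}[1]` with
`F₀ ∈ [G]₀` and `F_{k-1} ∈ [G]_{k-1}`. -/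
def Gen (G : C) : ℕ → C → Prop
  | 0 => GenZero G
  | (k+1) => fun X => ∃ (Y Z : C) (f : Y ⟶ X) (g : X ⟶ Z)
      (h : Z ⟶ (shiftFunctor C (1 : ℤ)).obj Y),
      Gen G k Y ∧ GenZero G Z ∧ Triangle.mk f g h ∈ distTriang C

/-- The objects of `⟨G⟩ₙ`, the idempotent closure of `[G]ₙ`:
direct summands of objects of `[G]ₙ`. -/
def ThickGen (G : C) (n : ℕ) (X : C) : Prop :=
  ∃ (X' : C) (b : BinaryBicone X X'), Nonempty b.IsBilimit ∧ Gen G n b.pt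

section

variable (R : Type u) [CommRing R] [IsNoetherianRing R]
  [HasDerivedCategory (ModuleCat.{u} R)]

open DerivedCategory

/-- The `R`-module `N` viewed as an object of the derived category `D(R-Mod)`. -/
noncomputable abbrev sObj (N : ModuleCat.{u} R) : DerivedCategory (ModuleCat.{u} R) :=
  (DerivedCategory.singleFunctor (ModuleCat.{u} R) 0).obj N

/-- `M ∈_f ⟨R⟩ₙ` : there are `M'` and a distinguished triangle
`P → M ⊕ M' → C → P[1]` with `P ∈ [R]ₙ` and `f · C = 0`. -/
def FApprox (f : R) (n : ℕ) (X : DerivedCategory (ModuleCat.{u} R)) : Prop :=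
  ∃ (X' : DerivedCategory (ModuleCat.{u} R)) (b : BinaryBicone X X')
    (_ : Nonempty b.IsBilimit)
    (P : DerivedCategory (ModuleCat.{u} R)) (_ : Gen (sObj R (ModuleCat.of R R)) n P)
    (KC : CochainComplex (ModuleCat.{u} R) ℤ)
    (u : P ⟶ b.pt) (v : b.pt ⟶ DerivedCategory.Q.obj KC)
    (w : DerivedCategory.Q.obj KC ⟶ (shiftFunctor _ (1 : ℤ)).obj P),
    (Triangle.mk u v w ∈ distTriang (DerivedCategory (ModuleCat.{u} R))) ∧ DerivedCategory.Q.map (f • 𝟙 KC) = 0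

/-- A morphism killed by precomposition with every map from a shift of `G` is killed by
precomposition with every map from an object of `[G]₀`. -/
lemma GenZero.comp_eq_zero {D : Type*} [Category* D] [Preadditive D] [HasShift D ℤ]
    {G X Y Z : D} (hZ : GenZero G Z) {β : X ⟶ Y}
    (hβ : ∀ (i : ℤ) (h : (shiftFunctor D i).obj G ⟶ X), h ≫ β = 0) (h : Z ⟶ X) :
    h ≫ β = 0 := by
  induction hZ with
  | shift n Z he =>
    obtain ⟨e⟩ := he
    rw [← cancel_epi e.inv, comp_zero, ← Category.assoc]
    exact hβ n _
  | zero Z hZ => exact hZ.eq_of_src _ _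
  | sum Z b hb he _ _ ihX ihY =>
    obtain ⟨hb⟩ := hb
    obtain ⟨e⟩ := he
    rw [← cancel_epi e.inv, comp_zero]
    apply BinaryCofan.IsColimit.hom_ext hb.isColimit
    · simpa using ihX (b.inl ≫ e.inv ≫ h)
    · simpa using ihY (b.inr ≫ e.inv ≫ h)

section

variable {A : Type*} [Category* A] [Abelian A] [HasDerivedCategory A]

lemma DerivedCategory.hom_singleFunctor_shift_eq_zero_of_projective
    (P N : A) [Projective P] {p : ℤ} (hp : p ≠ 0)
    (φ : (singleFunctor A 0).obj P ⟶ ((singleFunctor A 0).obj N)⟦p⟧) : φ = 0 := by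
  obtain hp | hp := hp.lt_or_gt
  · have := TStructure.t.isGE_shift ((singleFunctor A 0).obj N) 0 p (-p)
    exact TStructure.t.zero φ 0 (-p)
  · have := hasExt_of_hasDerivedCategory A
    obtain ⟨k, rfl⟩ : ∃ k : ℕ, p = (k + 1 : ℕ) := ⟨(p - 1).toNat, by lia⟩
    obtain ⟨e, rfl⟩ := (Abelian.Ext.homEquiv (X := P) (Y := N)).surjective φ
    rw [Abelian.Ext.eq_zero_of_projective e]
    exact Abelian.Ext.zero_hom ..

lemma DerivedCategory.hom_shift_singleFunctor_shift_eq_zero_of_projective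
    (P N : A) [Projective P] {i p : ℤ} (hp : p ≠ i)
    (φ : ((singleFunctor A 0).obj P)⟦i⟧ ⟶ ((singleFunctor A 0).obj N)⟦p⟧) : φ = 0 := by
  let e := (shiftFunctorAdd' (DerivedCategory A) (p - i) i p (by lia)).app
    ((singleFunctor A 0).obj N)
  obtain ⟨ψ, hψ⟩ := (shiftFunctor (DerivedCategory A) i).map_surjective (φ ≫ e.hom)
  rw [hom_singleFunctor_shift_eq_zero_of_projective P N (sub_ne_zero.2 hp) ψ,
    Functor.map_zero] at hψ
  rw [← cancel_mono e.hom, ← hψ, zero_comp]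

lemma DerivedCategory.comp_eq_zero_of_projective (P M N : A) [Projective P] {a b : ℤ}
    (hab : a ≠ b) (i : ℤ)
    (h : ((singleFunctor A 0).obj P)⟦i⟧ ⟶ ((singleFunctor A 0).obj M)⟦a⟧)
    (β : ((singleFunctor A 0).obj M)⟦a⟧ ⟶ ((singleFunctor A 0).obj N)⟦b⟧) : h ≫ β = 0 := by
  by_cases ha : a = i
  · exact hom_shift_singleFunctor_shift_eq_zero_of_projective P N (ha ▸ hab.symm) _
  · rw [hom_shift_singleFunctor_shift_eq_zero_of_projective P M ha h, zero_comp]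

/-- Dimension shifting: a map of degree `m + 1` between objects of `A` factors through a map of
degree `m`. -/
lemma DerivedCategory.exists_fac_of_enoughInjectives [EnoughInjectives A] (M N : A) (m : ℕ)
    (ξ : (singleFunctor A 0).obj M ⟶ ((singleFunctor A 0).obj N)⟦((m + 1 : ℕ) : ℤ)⟧) :
    ∃ (L : A) (α : (singleFunctor A 0).obj M ⟶ ((singleFunctor A 0).obj L)⟦(m : ℤ)⟧)
      (β : ((singleFunctor A 0).obj L)⟦(m : ℤ)⟧ ⟶
        ((singleFunctor A 0).obj N)⟦((m + 1 : ℕ) : ℤ)⟧), α ≫ β = ξ := by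
  have := hasExt_of_hasDerivedCategory A
  obtain ⟨x, rfl⟩ := (Abelian.Ext.homEquiv (X := M) (Y := N)).surjective ξ
  let S := ShortComplex.mk _ _ (cokernel.condition (Injective.ι N))
  have hS : S.ShortExact :=
    { exact := ShortComplex.exact_of_g_is_cokernel _ (cokernelIsCokernel S.f) }
  obtain ⟨y, hy⟩ := Abelian.Ext.covariant_sequence_exact₁ M hS x
    (Abelian.Ext.eq_zero_of_injective _) rfl
  exact ⟨S.X₃, y.hom, _, (Abelian.Ext.comp_hom y hS.extClass rfl).symm.trans (by rw [hy])⟩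

/-- The ghost lemma: maps of degree `m > n` between objects of `A` vanish on `[G]ₙ`
when `G` is a projective object. -/
lemma Gen.comp_eq_zero_of_projective [EnoughInjectives A] (G : A) [Projective G] {n : ℕ}
    {P : DerivedCategory A} (hP : Gen ((singleFunctor A 0).obj G) n P) (M N : A) {m : ℕ}
    (hm : n < m) (g : P ⟶ (singleFunctor A 0).obj M)
    (ξ : (singleFunctor A 0).obj M ⟶ ((singleFunctor A 0).obj N)⟦(m : ℤ)⟧) : g ≫ ξ = 0 := by
  induction n generalizing P N m with
  | zero =>
    obtain ⟨m, rfl⟩ := Nat.exists_eq_succ_of_ne_zero hm.ne'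
    obtain ⟨L, α, β, rfl⟩ := exists_fac_of_enoughInjectives M N m ξ
    rw [← Category.assoc]
    exact GenZero.comp_eq_zero hP
      (fun i h ↦ DerivedCategory.comp_eq_zero_of_projective G L N (by lia) i h β) _
  | succ n ih =>
    obtain ⟨m, rfl⟩ := Nat.exists_eq_succ_of_ne_zero (Nat.ne_zero_of_lt hm)
    obtain ⟨L, α, β, rfl⟩ := exists_fac_of_enoughInjectives M N m ξ
    obtain ⟨Y, Z, a, b, c, hY, hZ, hT⟩ := hP
    obtain ⟨t, ht⟩ : ∃ t : Z ⟶ _, g ≫ α = b ≫ t := Triangle.yoneda_exact₂ _ hT (g ≫ α)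
      ((Category.assoc _ _ _).symm.trans (ih hY L (by lia) (a ≫ g) α))
    rw [← Category.assoc, ht, Category.assoc,
      hZ.comp_eq_zero (fun i h ↦
        DerivedCategory.comp_eq_zero_of_projective G L N (by lia) i h β) t, comp_zero]

end

/-- If an `R`-module `M` satisfies `M ∈_f ⟨R⟩ₙ` in `D(R-Mod)`, then
`f · Ext^m_R(M, N) = 0` for every `R`-module `N` and every `m > n`;
here `Ext^m_R(M, N) = Hom_{D(R)}(M, N[m])` and multiplication by `f` on this group
is induced by the multiplication `f • 𝟙 M`. -/
theorem f_annihilates_ext (f : R) (n : ℕ) (M : ModuleCat.{u} R)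
    (hM : FApprox R f n (sObj R M)) (N : ModuleCat.{u} R) (m : ℕ) (hm : n < m)
    (ξ : sObj R M ⟶ (shiftFunctor _ ((m : ℤ))).obj (sObj R N)) :
    (DerivedCategory.singleFunctor (ModuleCat.{u} R) 0).map (f • 𝟙 M) ≫ ξ = 0 := by
  obtain ⟨X', b, _, P, hP, KC, p, v, w, hT, hf⟩ := hM
  obtain ⟨η, hη⟩ : ∃ η : Q.obj KC ⟶ _, b.fst ≫ ξ = v ≫ η :=
    Triangle.yoneda_exact₂ _ hT (b.fst ≫ ξ) ((Category.assoc _ _ _).symm.trans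
      (hP.comp_eq_zero_of_projective _ M N hm (p ≫ b.fst) ξ))
  have hη' : f • η = 0 := by
    rw [Functor.map_smul, CategoryTheory.Functor.map_id] at hf
    rw [← Category.id_comp η, ← Linear.smul_comp, hf, zero_comp]
  have hξ : ξ = b.inl ≫ v ≫ η := by
    rw [← hη, b.inl_fst_assoc]
  rw [Functor.map_smul, CategoryTheory.Functor.map_id, Linear.smul_comp, Category.id_comp, hξ,
    ← Linear.comp_smul, ← Linear.comp_smul, hη', comp_zero, comp_zero]
end
end

section
/- Let R be a commutative Noetherian ring such that Perf(R) = ⟨R⟩_n for some n (R is a strong generator of the perfect derived category in n steps). Then R has finite global dimension, in fact gl.dim(R) ≤ n. -/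
open CategoryTheory CategoryTheory.Limits CategoryTheory.Pretriangulated

universe v u

variable {C : Type u} [Category.{v} C] [Preadditive C] [HasZeroObject C]
  [HasShift C ℤ] [∀ n : ℤ, (shiftFunctor C n).Additive] [Pretriangulated C]

section

open DerivedCategory Opposite

variable (R : Type u) [CommRing R] [IsNoetherianRing R]
  [HasDerivedCategory (ModuleCat.{u} R)]

/-- An object of the derived category is perfect if it is isomorphic to a bounded
complex of finitely generated projective modules. -/
def IsPerfect (X : DerivedCategory (ModuleCat.{u} R)) : Prop :=
  ∃ K : CochainComplex (ModuleCat.{u} R) ℤ,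
    (∀ i : ℤ, Module.Finite R (K.X i) ∧ Projective (K.X i)) ∧
    (∃ a b : ℤ, ∀ i : ℤ, (i < a ∨ b < i) → IsZero (K.X i)) ∧
    Nonempty (X ≅ DerivedCategory.Q.obj K)

omit [HasZeroObject C] [∀ n : ℤ, (shiftFunctor C n).Additive] [Pretriangulated C] in
lemma GenZero.comp_eq_zero_s15 {G A B : C} {g : A ⟶ B}
    (hg : ∀ (n : ℤ) (f : (shiftFunctor C n).obj G ⟶ A), f ≫ g = 0)
    {X : C} (hX : GenZero G X) (f : X ⟶ A) : f ≫ g = 0 := by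
  induction hX with
  | shift n X e =>
    obtain ⟨e⟩ := e
    rw [← cancel_epi e.inv, comp_zero, ← Category.assoc, hg]
  | zero X hX => exact hX.eq_of_src _ _
  | sum Z b hb e _ _ ih₁ ih₂ =>
    obtain ⟨hb⟩ := hb
    obtain ⟨e⟩ := e
    rw [← cancel_epi e.inv]
    apply BinaryCofan.IsColimit.hom_ext hb.isColimit
    · simpa using ih₁ (b.inl ≫ e.inv ≫ f)
    · simpa using ih₂ (b.inr ≫ e.inv ≫ f)

lemma Gen.comp_comp_eq_zero {G A B D : C} {k : ℕ} {g₁ : A ⟶ B} {g₂ : B ⟶ D}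
    (h₁ : ∀ ⦃X : C⦄, Gen G k X → ∀ f : X ⟶ A, f ≫ g₁ = 0)
    (h₂ : ∀ ⦃X : C⦄, GenZero G X → ∀ f : X ⟶ B, f ≫ g₂ = 0)
    {X : C} (hX : Gen G (k + 1) X) (f : X ⟶ A) : f ≫ g₁ ≫ g₂ = 0 := by
  obtain ⟨Y, Z, u, v, w, hY, hZ, hT⟩ := hX
  obtain ⟨q : Z ⟶ B, hq : f ≫ g₁ = v ≫ q⟩ := Triangle.yoneda_exact₂ _ hT (f ≫ g₁)
    (show u ≫ f ≫ g₁ = 0 by simpa using h₁ hY (u ≫ f))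
  rw [← Category.assoc, hq, Category.assoc, h₂ hZ, comp_zero]

lemma ThickGen.comp_eq_zero_s15 {G A B : C} {n : ℕ} {g : A ⟶ B}
    (hg : ∀ ⦃X : C⦄, Gen G n X → ∀ f : X ⟶ A, f ≫ g = 0)
    {X : C} (hX : ThickGen G n X) (f : X ⟶ A) : f ≫ g = 0 := by
  obtain ⟨X', b, -, hb⟩ := hX
  simpa using b.inl ≫= hg hb (b.fst ≫ f)

section Abelian

universe w w' v₁ u₁

variable {A : Type u₁} [Category.{v₁} A] [Abelian A] [HasDerivedCategory.{w'} A]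

lemma DerivedCategory.eq_zero_of_projective_of_lt {P N : A} [Projective P] {k j : ℤ} (hkj : k < j)
    (f : ((singleFunctor A 0).obj P)⟦k⟧ ⟶ ((singleFunctor A 0).obj N)⟦j⟧) : f = 0 := by
  let := HasExt.standard A
  obtain ⟨m, rfl⟩ : ∃ m : ℕ, j = ((m + 1 : ℕ) : ℤ) + k :=
    ⟨(j - k - 1).toNat, by lia⟩
  let e := (shiftFunctorAdd (DerivedCategory A) ((m + 1 : ℕ) : ℤ) k).app
    ((singleFunctor A 0).obj N)
  obtain ⟨f₀, hf₀⟩ := (shiftFunctor (DerivedCategory A) k).map_surjective (f ≫ e.hom)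
  obtain ⟨f₁, rfl⟩ := Abelian.Ext.homEquiv.surjective f₀
  rw [Abelian.Ext.eq_zero_of_projective f₁] at hf₀
  have h0 : Abelian.Ext.homEquiv (0 : Abelian.Ext P N (m + 1)) = 0 := Abelian.Ext.zero_hom _ _ _
  rw [h0, Functor.map_zero] at hf₀
  rw [← cancel_mono e.hom, ← hf₀, zero_comp]

variable [HasExt.{w} A]

lemma GenZero.comp_ext_hom_shift_eq_zero {P M N : A} [Projective P]
    {X : DerivedCategory A} (hX : GenZero ((singleFunctor A 0).obj P) X)
    (e : Abelian.Ext M N 1) {j : ℤ} (f : X ⟶ ((singleFunctor A 0).obj M)⟦j⟧) :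
    f ≫ e.hom⟦j⟧' = 0 := by
  refine hX.comp_eq_zero_s15 (fun k f ↦ ?_) f
  by_cases hk : k < 1 + j
  · rw [← cancel_mono ((shiftFunctorAdd (DerivedCategory A) ((1 : ℕ) : ℤ) j).inv.app
      ((singleFunctor A 0).obj N)), zero_comp]
    exact DerivedCategory.eq_zero_of_projective_of_lt (by simpa using hk) _
  · have h₁ := TStructure.t.isLE_shift ((singleFunctor A 0).obj P) 0 k (-k)
    have h₂ := TStructure.t.isGE_shift ((singleFunctor A 0).obj M) 0 j (-j)
    rw [TStructure.t.zero f (-k) (-j), zero_comp]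

lemma Gen.comp_ext_hom_eq_zero [EnoughInjectives A] {P : A} [Projective P] {n : ℕ}
    {X : DerivedCategory A} (hX : Gen ((singleFunctor A 0).obj P) n X)
    {M N : A} (e : Abelian.Ext M N (n + 1)) (f : X ⟶ (singleFunctor A 0).obj M) :
    f ≫ e.hom = 0 := by
  induction n generalizing X N with
  | zero =>
    let i := (shiftFunctorZero (DerivedCategory A) ℤ).app ((singleFunctor A 0).obj M)
    have h := GenZero.comp_ext_hom_shift_eq_zero hX e (f ≫ i.inv)
    rw [← cancel_mono ((shiftFunctorZero (DerivedCategory A) ℤ).inv.app _)]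
    have hn := (shiftFunctorZero (DerivedCategory A) ℤ).inv.naturality e.hom
    rw [zero_comp, Category.assoc]
    refine (f ≫= hn).trans ?_
    simpa [i] using h
  | succ n ih =>
    let ⟨I⟩ := EnoughInjectives.presentation N
    have hS : (ShortComplex.mk _ _ (cokernel.condition I.f)).ShortExact :=
      { exact := ShortComplex.exact_cokernel I.f }
    obtain ⟨x, rfl⟩ := Abelian.Ext.covariant_sequence_exact₁ M hS e
      (Abelian.Ext.eq_zero_of_injective _) rfl
    have := Gen.comp_comp_eq_zero (g₁ := x.hom) (g₂ := hS.extClass.hom⟦((n + 1 : ℕ) : ℤ)⟧')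
      (fun Y hY f ↦ ih hY x f) (fun Y hY f ↦ hY.comp_ext_hom_shift_eq_zero _ f) hX f
    rw [Abelian.Ext.comp_hom, ShiftedHom.comp]
    simp only [← Category.assoc] at this ⊢
    rw [this, zero_comp]

end Abelian

open ZeroObject

omit [IsNoetherianRing R] in
lemma isPerfect_zero : IsPerfect R (0 : DerivedCategory (ModuleCat.{u} R)) := by
  refine ⟨0, fun i ↦ ?_, ⟨0, 0, fun i _ ↦ ?_⟩, ⟨?_⟩⟩
  · have h : IsZero ((0 : CochainComplex (ModuleCat.{u} R) ℤ).X i) :=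
      (HomologicalComplex.eval _ _ i).map_isZero (isZero_zero _)
    have := ModuleCat.subsingleton_of_isZero h
    exact ⟨inferInstance, h.projective⟩
  · exact (HomologicalComplex.eval _ _ i).map_isZero (isZero_zero _)
  · exact (isZero_zero _).iso (Q.map_isZero (isZero_zero _))

omit [IsNoetherianRing R] in
lemma exists_Q_map_eq_of_isKProjective {K L : CochainComplex (ModuleCat.{u} R) ℤ}
    [K.IsKProjective] (f : Q.obj K ⟶ Q.obj L) : ∃ φ : K ⟶ L, Q.map φ = f := by
  obtain ⟨g, hg⟩ := (CochainComplex.IsKProjective.Qh_map_bijective K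
    ((HomotopyCategory.quotient _ _).obj L)).surjective
    ((quotientCompQhIso _).hom.app K ≫ f ≫ (quotientCompQhIso _).inv.app L)
  obtain ⟨φ, rfl⟩ := (HomotopyCategory.quotient _ _).map_surjective g
  refine ⟨φ, ?_⟩
  have h := (quotientCompQhIso (ModuleCat.{u} R)).hom.naturality φ
  rw [Functor.comp_map, hg] at h
  simpa using h.symm

omit [IsNoetherianRing R] [HasDerivedCategory (ModuleCat.{u} R)] in
lemma finite_projective_mappingCone_X {K L : CochainComplex (ModuleCat.{u} R) ℤ} (φ : K ⟶ L)
    (hK : ∀ i : ℤ, Module.Finite R (K.X i) ∧ Projective (K.X i))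
    (hL : ∀ i : ℤ, Module.Finite R (L.X i) ∧ Projective (L.X i)) (i : ℤ) :
    Module.Finite R ((CochainComplex.mappingCone φ).X i) ∧
      Projective ((CochainComplex.mappingCone φ).X i) := by
  obtain ⟨_, _⟩ := hK (i + 1)
  obtain ⟨_, _⟩ := hL i
  let e := HomologicalComplex.homotopyCofiber.XIsoBiprod φ i (i + 1) rfl
  exact ⟨Module.Finite.equiv (e ≪≫ ModuleCat.biprodIsoProd _ _).toLinearEquiv.symm,
    Projective.of_iso e.symm inferInstance⟩

omit [IsNoetherianRing R] [HasDerivedCategory (ModuleCat.{u} R)] in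
lemma finite_projective_singleFunctor_obj_X (P : ModuleCat.{u} R) [Module.Finite R P]
    [Projective P] (i : ℤ) :
    Module.Finite R (((CochainComplex.singleFunctor (ModuleCat.{u} R) 0).obj P).X i) ∧
      Projective (((CochainComplex.singleFunctor (ModuleCat.{u} R) 0).obj P).X i) := by
  by_cases hi : i = 0
  · subst hi
    let e : P ≅ ((CochainComplex.singleFunctor (ModuleCat.{u} R) 0).obj P).X 0 :=
      (HomologicalComplex.singleObjXSelf (ComplexShape.up ℤ) 0 P).symm
    exact ⟨Module.Finite.equiv e.toLinearEquiv, Projective.of_iso e inferInstance⟩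
  · have h : IsZero (((CochainComplex.singleFunctor (ModuleCat.{u} R) 0).obj P).X i) :=
      HomologicalComplex.isZero_single_obj_X (ComplexShape.up ℤ) 0 P i hi
    have := ModuleCat.subsingleton_of_isZero h
    exact ⟨inferInstance, h.projective⟩

omit [IsNoetherianRing R] in
lemma IsPerfect.of_distTriang {X Z : DerivedCategory (ModuleCat.{u} R)} (hX : IsPerfect R X)
    (P : ModuleCat.{u} R) [Module.Finite R P] [Projective P] {f : X ⟶ sObj R P}
    {g : sObj R P ⟶ Z} {h : Z ⟶ X⟦(1 : ℤ)⟧} (hT : Triangle.mk f g h ∈ distTriang _) :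
    IsPerfect R Z := by
  obtain ⟨K, hK, ⟨a, b, hb⟩, ⟨e⟩⟩ := hX
  have (i : ℤ) : Projective (K.X i) := (hK i).2
  have : K.IsStrictlyLE b := by
    rw [CochainComplex.isStrictlyLE_iff]
    exact fun i hi ↦ hb i (Or.inr hi)
  have := CochainComplex.isKProjective_of_projective K b
  let L := (CochainComplex.singleFunctor (ModuleCat.{u} R) 0).obj P
  obtain ⟨φ, hφ⟩ := exists_Q_map_eq_of_isKProjective R (L := L) (e.inv ≫ f)
  have hT' := mappingCone_triangle_distinguished φ
  let t := isoTriangleOfIso₁₂ _ _ hT hT' e (Iso.refl _)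
    ((Category.comp_id f).trans ((e.hom ≫= hφ).trans (e.hom_inv_id_assoc f)).symm)
  refine ⟨CochainComplex.mappingCone φ,
    finite_projective_mappingCone_X R φ hK (finite_projective_singleFunctor_obj_X R P),
    ⟨min (a - 1) 0, max b 0, fun i hi ↦ ?_⟩, ⟨Triangle.π₃.mapIso t⟩⟩
  rw [CochainComplex.mappingCone.isZero_X_iff]
  exact ⟨hb _ (by lia), HomologicalComplex.isZero_single_obj_X (ComplexShape.up ℤ) 0 P i (by lia)⟩

lemma exists_isPerfect_distTriang (m : ℕ) (M : ModuleCat.{u} R) [Module.Finite R M] :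
    ∃ (K Z : DerivedCategory (ModuleCat.{u} R)) (f : K ⟶ sObj R M) (g : sObj R M ⟶ Z)
      (h : Z ⟶ K⟦(1 : ℤ)⟧), IsPerfect R K ∧ Z.IsLE (-m) ∧
        Triangle.mk f g h ∈ distTriang _ := by
  induction m generalizing M with
  | zero =>
    refine ⟨0, sObj R M, 0, 𝟙 _, 0, isPerfect_zero R, ?_, contractible_distinguished₁ _⟩
    simp only [Nat.cast_zero, neg_zero]
    infer_instance
  | succ m ih =>
    obtain ⟨r, p, hp⟩ := Module.Finite.exists_fin' R M
    let P : ModuleCat.{u} R := ModuleCat.of R (Fin r → R)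
    have : Projective P := inferInstance
    have hS := LinearMap.shortExact_shortComplexKer hp
    obtain ⟨K, Z, f, g, h, hK, hZ, hT⟩ := ih (ModuleCat.of R (LinearMap.ker p))
    obtain ⟨K', v, w, hT'⟩ := distinguished_cocone_triangle
      (f ≫ (singleFunctor (ModuleCat.{u} R) 0).map p.shortComplexKer.f)
    have O := Triangulated.someOctahedron rfl hT hS.singleTriangle_distinguished hT'
    have hr := rot_of_distTriang _ O.mem
    refine ⟨K', Z⟦(1 : ℤ)⟧, O.m₃, _, _, hK.of_distTriang R P hT', ?_, hr⟩
    exact TStructure.t.isLE_shift Z (-m) 1 _ (by lia)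

omit [IsNoetherianRing R] [HasDerivedCategory (ModuleCat.{u} R)] in
lemma moduleBaer_of_subsingleton_ext_one {N : ModuleCat.{u} R}
    (hN : ∀ I : Ideal R, Subsingleton (Abelian.Ext (ModuleCat.of R (R ⧸ I)) N 1)) :
    Module.Baer R N := by
  intro I g
  have hI := LinearMap.exact_subtype_mkQ I
  have hS := ModuleCat.shortComplex_shortExact
    (ModuleCat.shortComplexOfCompEqZero _ _ hI.linearMap_comp_eq_zero) hI
    I.injective_subtype I.mkQ_surjective
  obtain ⟨x, hx⟩ := Abelian.Ext.contravariant_sequence_exact₁ hS N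
    (Abelian.Ext.mk₀ (ModuleCat.ofHom g)) (add_zero 1) ((hN I).elim _ _)
  obtain ⟨g', rfl⟩ := (Abelian.Ext.mk₀_bijective _ _).surjective x
  rw [Abelian.Ext.mk₀_comp_mk₀] at hx
  have h := (Abelian.Ext.mk₀_bijective _ _).injective hx
  exact ⟨g'.hom, fun a ha ↦ LinearMap.congr_fun (congrArg ModuleCat.Hom.hom h) ⟨a, ha⟩⟩

omit [IsNoetherianRing R] [HasDerivedCategory (ModuleCat.{u} R)] in
lemma hasInjectiveDimensionLT_of_subsingleton_ext (n : ℕ) {N : ModuleCat.{u} R}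
    (hN : ∀ (M : ModuleCat.{u} R) [Module.Finite R M], Subsingleton (Abelian.Ext M N (n + 1))) :
    HasInjectiveDimensionLT N (n + 1) := by
  induction n generalizing N with
  | zero =>
    have := (moduleBaer_of_subsingleton_ext_one R fun I ↦
      hN (ModuleCat.of R (R ⧸ I))).injective
    have : Injective N := Module.injective_object_of_injective_module R N
    exact inferInstanceAs (HasInjectiveDimensionLT N 1)
  | succ n ih =>
    let ⟨I⟩ := EnoughInjectives.presentation N
    have hS : (ShortComplex.mk _ _ (cokernel.condition I.f)).ShortExact :=
      { exact := ShortComplex.exact_cokernel I.f }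
    refine (hS.hasInjectiveDimensionLT_X₃_iff n I.injective).1
      (ih fun M _ ↦ subsingleton_of_forall_eq 0 fun x ↦ ?_)
    obtain ⟨y, rfl⟩ := Abelian.Ext.covariant_sequence_exact₃ M hS x rfl ((hN M).elim _ _)
    rw [y.eq_zero_of_injective, Abelian.Ext.zero_comp]

lemma ext_succ_eq_zero_of_perf_eq_thickGen {n : ℕ}
    (hgen : ∀ X : DerivedCategory (ModuleCat.{u} R),
      IsPerfect R X → ThickGen (sObj R (ModuleCat.of R R)) n X)
    {M N : ModuleCat.{u} R} [Module.Finite R M] (e : Abelian.Ext M N (n + 1)) : e = 0 := by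
  obtain ⟨K, Z, f, g, h, hK, hZ, hT⟩ := exists_isPerfect_distTriang R (n + 2) M
  have hf := ThickGen.comp_eq_zero_s15 (fun X hX f ↦ hX.comp_ext_hom_eq_zero e f) (hgen K hK) f
  obtain ⟨q : Z ⟶ _, hq : e.hom = g ≫ q⟩ := Triangle.yoneda_exact₂ _ hT e.hom hf
  have := TStructure.t.isGE_shift ((singleFunctor (ModuleCat.{u} R) 0).obj N) 0
    ((n + 1 : ℕ) : ℤ) (-((n + 1 : ℕ) : ℤ)) (by lia)
  have : TStructure.t.IsLE Z (-((n + 2 : ℕ) : ℤ)) := hZ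
  have hq0 : q = 0 := TStructure.t.zero q (-((n + 2 : ℕ) : ℤ)) (-((n + 1 : ℕ) : ℤ)) (by lia)
  ext
  rw [hq, hq0, comp_zero, Abelian.Ext.zero_hom]

omit [IsNoetherianRing R] [HasDerivedCategory (ModuleCat.{u} R)] in
lemma subsingleton_ext_succ_obj_obj {M N : ModuleCat.{u} R} {p : ℕ}
    (h : Subsingleton (Abelian.Ext M N (p + 1))) :
    Subsingleton (((Ext R (ModuleCat.{u} R) (p + 1)).obj (op M)).obj N) := by
  let P := projectiveResolution M
  rw [← ModuleCat.isZero_iff_subsingleton]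
  refine IsZero.of_iso ?_ (P.isoExt (p + 1) N)
  rw [← HomologicalComplex.exactAt_iff_isZero_homology,
    HomologicalComplex.exactAt_iff' _ p (p + 1) (p + 2) (by simp) (by simp),
    ShortComplex.moduleCat_exact_iff]
  exact fun x hx ↦ (P.extMk_eq_zero_iff x (p + 2) rfl hx p rfl).1 (h.elim _ _)

/-- If `R` is a strong generator of `Perf(R)` in `n` steps, i.e. every perfect complex
lies in `⟨R⟩ₙ`, then `R` has global dimension at most `n`: `Ext^i` vanishes for
`i > n`. -/
theorem globalDimension_le_of_perf_eq_thickGen (n : ℕ)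
    (hgen : ∀ X : DerivedCategory (ModuleCat.{u} R),
      IsPerfect R X → ThickGen (sObj R (ModuleCat.of R R)) n X)
    (M N : ModuleCat.{u} R) (i : ℕ) (hi : n < i) :
    Subsingleton (((Ext R (ModuleCat.{u} R) i).obj (op M)).obj N) := by
  have := hasInjectiveDimensionLT_of_subsingleton_ext R n (N := N) fun M _ ↦
    subsingleton_of_forall_eq 0 (ext_succ_eq_zero_of_perf_eq_thickGen R hgen)
  obtain ⟨p, rfl⟩ := Nat.exists_eq_succ_of_ne_zero (Nat.ne_zero_of_lt hi)
  exact subsingleton_ext_succ_obj_obj R (HasInjectiveDimensionLT.subsingleton N (n + 1) _ hi M)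

end
end

section
/- Let R be a commutative Noetherian ring and M, N ∈ D^b(R-mod) bounded complexes of finitely generated modules. If Supp M ∩ Supp N ≠ ∅, then Hom_{D(R)}(M, N[i]) ≠ 0 for some i ∈ ℤ. -/
open CategoryTheory CategoryTheory.Limits DerivedCategory

/-- Support of an object of the derived category of modules: the union of the
supports of its cohomology modules. -/
noncomputable def derivedSupport (R : Type u) [CommRing R]
    [HasDerivedCategory (ModuleCat.{u} R)]
    (X : DerivedCategory (ModuleCat.{u} R)) : Set (PrimeSpectrum R) :=
  ⋃ i : ℤ, Module.support R ((DerivedCategory.homologyFunctor (ModuleCat.{u} R) i).obj X)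

open Pretriangulated

section Orthogonality

variable {C : Type*} [Category* C] [Preadditive C] [HasShift C ℤ]
  [∀ n : ℤ, (shiftFunctor C n).Additive]

/-- All morphisms between all shifts of `X` and all shifts of `Y` vanish. -/
def ShiftOrthogonal (X Y : C) : Prop :=
  ∀ (i j : ℤ) (φ : (shiftFunctor C i).obj X ⟶ (shiftFunctor C j).obj Y), φ = 0

lemma shiftOrthogonal_of_forall_shift_right {X Y : C}
    (h : ∀ (j : ℤ) (φ : X ⟶ (shiftFunctor C j).obj Y), φ = 0) : ShiftOrthogonal X Y := by
  intro i j φ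
  apply (shiftFunctor C (-i)).map_injective
  rw [Functor.map_zero, ← cancel_mono ((shiftFunctorAdd' C j (-i) (j - i) (by lia)).inv.app Y),
    ← cancel_epi ((shiftFunctorCompIsoId C i (-i) (by lia)).inv.app X)]
  exact (h _ _).trans (by simp)

variable [HasZeroObject C] [Pretriangulated C]

lemma ShiftOrthogonal.obj₃_left {T : Triangle C} (hT : T ∈ distTriang C) {Y : C}
    (h₁ : ShiftOrthogonal T.obj₁ Y) (h₂ : ShiftOrthogonal T.obj₂ Y) :
    ShiftOrthogonal T.obj₃ Y := by
  refine shiftOrthogonal_of_forall_shift_right fun j φ => ?_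
  have e : T.mor₂ ≫ φ = 0 := by
    rw [← cancel_epi ((shiftFunctorZero C ℤ).hom.app T.obj₂)]
    exact (h₂ _ _ _).trans (by simp)
  obtain ⟨ψ, hψ⟩ := T.yoneda_exact₃ hT φ e
  rw [hψ, h₁ _ _ ψ, comp_zero]

lemma ShiftOrthogonal.obj₃_right {T : Triangle C} (hT : T ∈ distTriang C) {X : C}
    (h₁ : ShiftOrthogonal X T.obj₁) (h₂ : ShiftOrthogonal X T.obj₂) :
    ShiftOrthogonal X T.obj₃ := by
  intro i j φ
  have hT' := Triangle.shift_distinguished T hT j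
  have e (χ : (shiftFunctor C i).obj X ⟶ (shiftFunctor C (1 : ℤ)).obj
      ((shiftFunctor C j).obj T.obj₁)) : χ = 0 := by
    rw [← cancel_mono ((shiftFunctorAdd' C j 1 (j + 1) rfl).inv.app T.obj₁)]
    exact (h₁ _ _ _).trans (by simp)
  obtain ⟨ψ, hψ⟩ := Triangle.coyoneda_exact₃ _ hT' φ (e _)
  rw [hψ]
  exact (congrArg (· ≫ _) (h₂ _ _ ψ)).trans zero_comp

end Orthogonality

section Modules

variable {R : Type*} [CommRing R] {A B D : Type*} [AddCommGroup A] [AddCommGroup B]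
  [AddCommGroup D] [Module R A] [Module R B] [Module R D]

lemma Module.support_subset_union_of_exact {f : A →ₗ[R] B} {g : B →ₗ[R] D}
    (h : Function.Exact f g) :
    Module.support R B ⊆ Module.support R A ∪ Module.support R D := by
  intro x
  contrapose
  simp only [Set.mem_union, not_or, and_imp, Module.notMem_support_iff']
  intro H₁ H₂ m
  obtain ⟨r, hr, e₁⟩ := H₂ (g m)
  rw [← map_smul, h] at e₁
  obtain ⟨m', hm'⟩ := e₁
  obtain ⟨s, hs, e₁⟩ := H₁ m'
  exact ⟨_, x.asIdeal.primeCompl.mul_mem hs hr, by rw [mul_smul, ← hm', ← map_smul, e₁, map_zero]⟩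

lemma Module.finite_of_exact [IsNoetherianRing R] {f : A →ₗ[R] B} {g : B →ₗ[R] D}
    (h : Function.Exact f g) [Module.Finite R A] [Module.Finite R D] : Module.Finite R B := by
  have := isNoetherian_of_range_eq_ker f g (LinearMap.exact_iff.mp h).symm
  infer_instance

/-- If `A --x--> A --> B --> D --x--> D` is exact, then the support of `B` lies in `V(x)`. -/
lemma Module.support_subset_zeroLocus_of_exact {x : R} {f : A →ₗ[R] B} {g : B →ₗ[R] D}
    (h : Function.Exact f g) (hf : ∀ a, f (x • a) = 0) (hg : ∀ b, x • g b = 0) :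
    Module.support R B ⊆ PrimeSpectrum.zeroLocus {x} := by
  intro p hp
  rw [PrimeSpectrum.mem_zeroLocus, Set.singleton_subset_iff]
  refine p.2.mem_of_pow_mem 2 (Module.annihilator_le_of_mem_support hp ?_)
  rw [Module.mem_annihilator]
  intro b
  obtain ⟨a, ha⟩ := (h (x • b)).mp (by rw [map_smul, hg])
  rw [pow_two, mul_smul, ← ha, ← map_smul, hf]

lemma Module.support_inter_zeroLocus_subset_of_exact [Module.Finite R A] {x : R} {f : A →ₗ[R] B}
    (h : Function.Exact (LinearMap.lsmul R A x) f) :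
    Module.support R A ∩ PrimeSpectrum.zeroLocus {x} ⊆ Module.support R B := by
  rw [← Module.support_quotSMulTop]
  let g : QuotSMulTop x A →ₗ[R] B := Submodule.liftQ _ f (by
    intro a ha
    obtain ⟨b, -, rfl⟩ := ha
    exact (h _).mpr ⟨b, rfl⟩)
  refine Module.support_subset_of_injective g ?_
  rw [← LinearMap.ker_eq_bot, Submodule.ker_liftQ_eq_bot']
  ext a
  refine ⟨?_, fun ha => ?_⟩
  · rintro ⟨b, -, rfl⟩
    exact (h _).mpr ⟨b, rfl⟩
  · obtain ⟨b, rfl⟩ := (h a).mp ha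
    exact ⟨b, trivial, rfl⟩

lemma Module.exists_linearMap_ne_zero_of_support_eq_singleton [IsNoetherianRing R]
    [Module.Finite R A] [Module.Finite R B] {p : PrimeSpectrum R}
    (hA : p ∈ Module.support R A) (hB : Module.support R B = {p}) :
    ∃ h : A →ₗ[R] B, h ≠ 0 := by
  by_contra! H
  have : Subsingleton (A →ₗ[R] B) := ⟨fun a b => by rw [H a, H b]⟩
  obtain ⟨r, hr, hreg⟩ := IsSMulRegular.subsingleton_linearMap_iff.mp this
  have hrp : r ∈ p.asIdeal := Module.annihilator_le_of_mem_support hA hr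
  have : r ∈ (Module.annihilator R B).radical := by
    rw [← PrimeSpectrum.vanishingIdeal_zeroLocus_eq_radical, ← Module.support_eq_zeroLocus, hB,
      PrimeSpectrum.vanishingIdeal_singleton]
    exact hrp
  obtain ⟨n, hn⟩ := this
  have : Subsingleton B := ⟨fun a b => hreg.pow n (by
    simp [Module.mem_annihilator.mp hn])⟩
  rw [Module.support_eq_empty] at hB
  exact Set.singleton_ne_empty p hB.symm

end Modules

namespace DerivedCategory

instance homologyFunctor_linear (S : Type*) [Ring S] (C : Type*) [Category* C] [Abelian C]
    [Linear S C] [HasDerivedCategory C] (n : ℤ) : (homologyFunctor C n).Linear S := by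
  have : (HomologicalComplex.homologyFunctor C (ComplexShape.up ℤ) n).Linear S :=
    ⟨fun f r => ShortComplex.homologyMap_smul
      ((HomologicalComplex.shortComplexFunctor C (ComplexShape.up ℤ) n).map f) r⟩
  have : (Q ⋙ homologyFunctor C n).Linear S :=
    Functor.linear_of_iso _ (homologyFunctorFactors C n).symm
  rw [Functor.linear_iff]
  intro X r
  let e := Q.objObjPreimageIso X
  have h₁ : r • 𝟙 X = e.inv ≫ Q.map (r • 𝟙 _) ≫ e.hom := by simp
  have h₂ : (homologyFunctor C n).map (Q.map (r • 𝟙 (Q.objPreimage X))) = r • 𝟙 _ := by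
    rw [← Functor.comp_map, Functor.map_smul, CategoryTheory.Functor.map_id]
    rfl
  rw [h₁, Functor.map_comp, Functor.map_comp, h₂]
  simp [← Functor.map_comp]

section Truncation

variable {C : Type*} [Category* C] [Abelian C] [HasDerivedCategory C]

lemma exists_map_single_of_isLE (X : DerivedCategory C) (n : ℤ) [X.IsLE n] :
    ∃ (Y : C) (f : X ⟶ (singleFunctor C n).obj Y), IsIso ((homologyFunctor C n).map f) := by
  obtain ⟨Z, W, hZ, hW, f, g, h, hT⟩ := TStructure.t.exists_triangle X (n - 1) n (by lia)
  have : Z.IsLE (n - 1) := ⟨hZ⟩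
  have : W.IsGE n := ⟨hW⟩
  have hz (i : ℤ) (hi : n - 1 < i) : IsZero ((homologyFunctor C i).obj Z) :=
    isZero_of_isLE Z (n - 1) i hi
  have hg (i : ℤ) (hi : n ≤ i) : IsIso ((homologyFunctor C i).map g) := by
    have h₁ : Mono ((homologyFunctor C i).map g) :=
      (HomologySequence.mono_homologyMap_mor₂_iff _ hT i).mpr
        ((hz i (by lia)).eq_of_src _ _)
    have h₂ : Epi ((homologyFunctor C i).map g) :=
      (HomologySequence.epi_homologyMap_mor₂_iff _ hT i (i + 1)).mpr
        ((hz (i + 1) (by lia)).eq_of_tgt _ _)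
    exact isIso_of_mono_of_epi _
  have : W.IsLE n := (isLE_iff _ _).mpr fun i hi => by
    have := hg i hi.le
    exact (isZero_of_isLE X n i hi).of_iso (asIso ((homologyFunctor C i).map g)).symm
  obtain ⟨Y, ⟨e⟩⟩ := exists_iso_singleFunctor_obj_of_isGE_of_isLE W n
  have := hg n le_rfl
  exact ⟨Y, g ≫ e.hom, by rw [Functor.map_comp]; infer_instance⟩

lemma exists_map_single_of_isGE (X : DerivedCategory C) (n : ℤ) [X.IsGE n] :
    ∃ (Y : C) (f : (singleFunctor C n).obj Y ⟶ X), IsIso ((homologyFunctor C n).map f) := by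
  obtain ⟨Z, W, hZ, hW, f, g, h, hT⟩ := TStructure.t.exists_triangle X n (n + 1) rfl
  have : Z.IsLE n := ⟨hZ⟩
  have : W.IsGE (n + 1) := ⟨hW⟩
  have hw (i : ℤ) (hi : i < n + 1) : IsZero ((homologyFunctor C i).obj W) :=
    isZero_of_isGE W (n + 1) i hi
  have hf (i : ℤ) (hi : i ≤ n) : IsIso ((homologyFunctor C i).map f) := by
    have h₁ : Mono ((homologyFunctor C i).map f) :=
      (HomologySequence.mono_homologyMap_mor₁_iff _ hT (i - 1) i).mpr
        ((hw (i - 1) (by lia)).eq_of_src _ _)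
    have h₂ : Epi ((homologyFunctor C i).map f) :=
      (HomologySequence.epi_homologyMap_mor₁_iff _ hT i).mpr
        ((hw i (by lia)).eq_of_tgt _ _)
    exact isIso_of_mono_of_epi _
  have : Z.IsGE n := (isGE_iff _ _).mpr fun i hi => by
    have := hf i hi.le
    exact (isZero_of_isGE X n i hi).of_iso (asIso ((homologyFunctor C i).map f))
  obtain ⟨Y, ⟨e⟩⟩ := exists_iso_singleFunctor_obj_of_isGE_of_isLE Z n
  have := hf n le_rfl
  exact ⟨Y, e.inv ≫ f, by rw [Functor.map_comp]; infer_instance⟩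

/-- A nonzero morphism from the top cohomology of `X` to the bottom cohomology of `Y`, both in
degree `n`, is induced by a nonzero morphism `X ⟶ Y`. -/
lemma exists_hom_ne_zero_of_homology {X Y : DerivedCategory C} {n : ℤ} [X.IsLE n] [Y.IsGE n]
    (u : (homologyFunctor C n).obj X ⟶ (homologyFunctor C n).obj Y) (hu : u ≠ 0) :
    ∃ φ : X ⟶ Y, φ ≠ 0 := by
  obtain ⟨A, f, hf⟩ := exists_map_single_of_isLE X n
  obtain ⟨B, g, hg⟩ := exists_map_single_of_isGE Y n
  let α := singleFunctorCompHomologyFunctorIso C n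
  let v : A ⟶ B := α.inv.app A ≫ inv ((homologyFunctor C n).map f) ≫ u ≫
    inv ((homologyFunctor C n).map g) ≫ α.hom.app B
  have hv : (homologyFunctor C n).map (f ≫ (singleFunctor C n).map v ≫ g) = u := by
    have := α.hom.naturality v
    have h2 : (homologyFunctor C n).map ((singleFunctor C n).map v) =
      inv ((homologyFunctor C n).map f) ≫ u ≫ inv ((homologyFunctor C n).map g) := by
      rw [← cancel_mono (α.hom.app B)]
      exact this.trans (by simp [v])
    simp [h2]
  refine ⟨f ≫ (singleFunctor C n).map v ≫ g, fun h0 => hu ?_⟩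
  rw [← hv, h0, Functor.map_zero]

end Truncation

end DerivedCategory

section Koszul

variable {R : Type u} [CommRing R] [HasDerivedCategory (ModuleCat.{u} R)]

lemma support_homology_subset_derivedSupport (X : DerivedCategory (ModuleCat.{u} R)) (i : ℤ) :
    Module.support R ((homologyFunctor (ModuleCat.{u} R) i).obj X) ⊆ derivedSupport R X :=
  Set.subset_iUnion_of_subset i subset_rfl

/-- Objects of the derived category with bounded, finitely generated cohomology. -/
structure IsBoundedFinite (X : DerivedCategory (ModuleCat.{u} R)) : Prop where
  bounded : ∃ a b : ℤ, ∀ i : ℤ, (i < a ∨ b < i) →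
    IsZero ((homologyFunctor (ModuleCat.{u} R) i).obj X)
  finite : ∀ i : ℤ, Module.Finite R ((homologyFunctor (ModuleCat.{u} R) i).obj X)

lemma IsBoundedFinite.exists_isLE {X : DerivedCategory (ModuleCat.{u} R)}
    (hX : IsBoundedFinite X) (hs : (derivedSupport R X).Nonempty) :
    ∃ n : ℤ, X.IsLE n ∧
      (Module.support R ((homologyFunctor (ModuleCat.{u} R) n).obj X)).Nonempty := by
  obtain ⟨a, b, hab⟩ := hX.bounded
  obtain ⟨p, hp⟩ := hs
  obtain ⟨i, hi⟩ := Set.mem_iUnion.mp hp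
  obtain ⟨n, hn, hmax⟩ := Int.exists_greatest_of_bdd
    (P := fun n => ¬ IsZero ((homologyFunctor (ModuleCat.{u} R) n).obj X))
    ⟨b, fun z hz => by by_contra! h; exact hz (hab z (Or.inr h))⟩
    ⟨i, fun h => by
      have := ModuleCat.subsingleton_of_isZero h
      rw [Module.support_eq_empty] at hi
      exact hi⟩
  refine ⟨n, (isLE_iff _ _).mpr fun j hj => ?_, ?_⟩
  · by_contra h
    exact absurd (hmax j h) (by lia)
  · rw [Module.nonempty_support_iff, ← not_subsingleton_iff_nontrivial]
    exact fun _ => hn (ModuleCat.isZero_of_subsingleton _)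

lemma IsBoundedFinite.exists_isGE {X : DerivedCategory (ModuleCat.{u} R)}
    (hX : IsBoundedFinite X) (hs : (derivedSupport R X).Nonempty) :
    ∃ n : ℤ, X.IsGE n ∧
      (Module.support R ((homologyFunctor (ModuleCat.{u} R) n).obj X)).Nonempty := by
  obtain ⟨a, b, hab⟩ := hX.bounded
  obtain ⟨p, hp⟩ := hs
  obtain ⟨i, hi⟩ := Set.mem_iUnion.mp hp
  obtain ⟨n, hn, hmin⟩ := Int.exists_least_of_bdd
    (P := fun n => ¬ IsZero ((homologyFunctor (ModuleCat.{u} R) n).obj X))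
    ⟨a, fun z hz => by by_contra! h; exact hz (hab z (Or.inl h))⟩
    ⟨i, fun h => by
      have := ModuleCat.subsingleton_of_isZero h
      rw [Module.support_eq_empty] at hi
      exact hi⟩
  refine ⟨n, (isGE_iff _ _).mpr fun j hj => ?_, ?_⟩
  · by_contra h
    exact absurd (hmin j h) (by lia)
  · rw [Module.nonempty_support_iff, ← not_subsingleton_iff_nontrivial]
    exact fun _ => hn (ModuleCat.isZero_of_subsingleton _)

variable [IsNoetherianRing R]

lemma IsBoundedFinite.cone {X : DerivedCategory (ModuleCat.{u} R)} (hX : IsBoundedFinite X)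
    (x : R) {Y : DerivedCategory (ModuleCat.{u} R)} {f : X ⟶ Y}
    {g : Y ⟶ (shiftFunctor (DerivedCategory (ModuleCat.{u} R)) (1 : ℤ)).obj X}
    (hT : Triangle.mk (x • 𝟙 X) f g ∈ distTriang (DerivedCategory (ModuleCat.{u} R))) :
    IsBoundedFinite Y ∧ derivedSupport R Y = derivedSupport R X ∩ PrimeSpectrum.zeroLocus {x} := by
  have hx (i : ℤ) : ((homologyFunctor (ModuleCat.{u} R) i).map (x • 𝟙 X)).hom =
      LinearMap.lsmul R _ x := by
    rw [CategoryTheory.Functor.map_smul, CategoryTheory.Functor.map_id]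
    rfl
  have ex₂ (i : ℤ) : Function.Exact
      (LinearMap.lsmul R ((homologyFunctor (ModuleCat.{u} R) i).obj X) x)
      ((homologyFunctor (ModuleCat.{u} R) i).map f).hom := by
    rw [← hx]
    exact (ShortComplex.ShortExact.moduleCat_exact_iff_function_exact _).mp
      (HomologySequence.exact₂ _ hT i)
  have ex₃ (i : ℤ) : Function.Exact
      ((homologyFunctor (ModuleCat.{u} R) i).map f).hom
      (HomologySequence.δ (Triangle.mk (x • 𝟙 X) f g) i (i + 1)).hom :=
    (ShortComplex.ShortExact.moduleCat_exact_iff_function_exact _).mp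
      (HomologySequence.exact₃ _ hT i (i + 1))
  have hδ (i : ℤ) (y : (homologyFunctor (ModuleCat.{u} R) i).obj Y) :
      x • (HomologySequence.δ (Triangle.mk (x • 𝟙 X) f g) i (i + 1)).hom y = 0 := by
    have h := congrArg ModuleCat.Hom.hom (HomologySequence.δ_comp _ hT i (i + 1))
    exact (LinearMap.congr_fun (hx (i + 1)) _).symm.trans (LinearMap.congr_fun h y)
  have := hX.finite
  have hfin (i : ℤ) : Module.Finite R ((homologyFunctor (ModuleCat.{u} R) i).obj Y) :=
    have : Module.Finite R ((homologyFunctor (ModuleCat.{u} R) (i + 1)).obj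
      (Triangle.mk (x • 𝟙 X) f g).obj₁) := hX.finite (i + 1)
    Module.finite_of_exact (ex₃ i)
  refine ⟨⟨?_, hfin⟩, subset_antisymm ?_ ?_⟩
  · obtain ⟨a, b, hab⟩ := hX.bounded
    refine ⟨a - 1, b, fun i hi => ?_⟩
    exact (HomologySequence.exact₃ _ hT i (i + 1)).isZero_of_both_zeros
      ((hab i (by lia)).eq_of_src _ _) ((hab (i + 1) (by lia)).eq_of_tgt _ _)
  · refine Set.iUnion_subset fun i p hp => ⟨?_, ?_⟩
    · exact (Module.support_subset_union_of_exact (ex₃ i) hp).elim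
        (fun h => Set.mem_iUnion_of_mem i h) (fun h => Set.mem_iUnion_of_mem (i + 1) h)
    · exact Module.support_subset_zeroLocus_of_exact (ex₃ i)
        (fun a => (ex₂ i _).mpr ⟨a, rfl⟩) (hδ i) hp
  · rintro p ⟨hp, hpx⟩
    obtain ⟨i, hi⟩ := Set.mem_iUnion.mp hp
    exact Set.mem_iUnion_of_mem i
      (Module.support_inter_zeroLocus_subset_of_exact (ex₂ i) ⟨hi, hpx⟩)

/-- Existence and properties of the Koszul object of `X` on a finite set of elements of `R`. -/
lemma IsBoundedFinite.exists_koszul {X : DerivedCategory (ModuleCat.{u} R)}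
    (hX : IsBoundedFinite X) (s : Finset R) :
    ∃ Y : DerivedCategory (ModuleCat.{u} R), IsBoundedFinite Y ∧
      derivedSupport R Y = derivedSupport R X ∩ PrimeSpectrum.zeroLocus (s : Set R) ∧
      (∀ Z, ShiftOrthogonal X Z → ShiftOrthogonal Y Z) ∧
      (∀ Z, ShiftOrthogonal Z X → ShiftOrthogonal Z Y) := by
  classical
  induction s using Finset.induction_on with
  | empty => exact ⟨X, hX, by simp, fun _ => id, fun _ => id⟩
  | insert x s _ ih =>
    obtain ⟨Y, hY, hs, hl, hr⟩ := ih
    obtain ⟨W, f, g, hT⟩ := distinguished_cocone_triangle (x • 𝟙 Y)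
    obtain ⟨hW, hWs⟩ := hY.cone x hT
    refine ⟨W, hW, ?_, fun Z hZ => ?_, fun Z hZ => ?_⟩
    · rw [hWs, hs, Finset.coe_insert, Set.insert_eq, PrimeSpectrum.zeroLocus_union,
        Set.inter_assoc, Set.inter_comm (PrimeSpectrum.zeroLocus _)]
    · exact ShiftOrthogonal.obj₃_left hT (hl Z hZ) (hl Z hZ)
    · exact ShiftOrthogonal.obj₃_right hT (hr Z hZ) (hr Z hZ)

lemma not_shiftOrthogonal_of_derivedSupport_eq_singleton
    {X Y : DerivedCategory (ModuleCat.{u} R)} (hX : IsBoundedFinite X) (hY : IsBoundedFinite Y)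
    {p : PrimeSpectrum R} (hXp : derivedSupport R X = {p}) (hYp : derivedSupport R Y = {p}) :
    ¬ ShiftOrthogonal X Y := by
  intro H
  obtain ⟨a, ha, hXa⟩ := hX.exists_isLE (hXp ▸ Set.singleton_nonempty p)
  obtain ⟨b, hb, hYb⟩ := hY.exists_isGE (hYp ▸ Set.singleton_nonempty p)
  have hXa' : Module.support R ((homologyFunctor (ModuleCat.{u} R) a).obj X) = {p} :=
    hXa.subset_singleton_iff.mp (hXp ▸ support_homology_subset_derivedSupport X a)
  have hYb' : Module.support R ((homologyFunctor (ModuleCat.{u} R) b).obj Y) = {p} :=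
    hYb.subset_singleton_iff.mp (hYp ▸ support_homology_subset_derivedSupport Y b)
  have := hX.finite a
  have := hY.finite b
  obtain ⟨h, hh⟩ := Module.exists_linearMap_ne_zero_of_support_eq_singleton
    (hXa' ▸ Set.mem_singleton p) hYb'
  have : ((shiftFunctor (DerivedCategory (ModuleCat.{u} R)) a).obj X).IsLE 0 :=
    TStructure.t.isLE_shift X a a 0
  have : ((shiftFunctor (DerivedCategory (ModuleCat.{u} R)) b).obj Y).IsGE 0 :=
    TStructure.t.isGE_shift Y b b 0
  let eX : (homologyFunctor (ModuleCat.{u} R) 0).obj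
      ((shiftFunctor (DerivedCategory (ModuleCat.{u} R)) a).obj X) ≅
        (homologyFunctor (ModuleCat.{u} R) a).obj X :=
    ((homologyFunctor (ModuleCat.{u} R) 0).shiftIso a 0 a (by lia)).app X
  let eY : (homologyFunctor (ModuleCat.{u} R) 0).obj
      ((shiftFunctor (DerivedCategory (ModuleCat.{u} R)) b).obj Y) ≅
        (homologyFunctor (ModuleCat.{u} R) b).obj Y :=
    ((homologyFunctor (ModuleCat.{u} R) 0).shiftIso b 0 b (by lia)).app Y
  have hu : eX.hom ≫ ModuleCat.ofHom h ≫ eY.inv ≠ 0 := fun h0 => hh (by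
    rw [Preadditive.IsIso.comp_left_eq_zero, Preadditive.IsIso.comp_right_eq_zero] at h0
    exact congrArg ModuleCat.Hom.hom h0)
  obtain ⟨φ, hφ⟩ := exists_hom_ne_zero_of_homology (n := 0) _ hu
  exact hφ (H a b φ)

end Koszul

/-- If `M`, `N` are objects of `D^b(R-mod)` (bounded complexes with finitely generated
cohomology over a commutative Noetherian ring) with `Supp M ∩ Supp N ≠ ∅`, then
`Hom_{D(R)}(M, N[i]) ≠ 0` for some `i : ℤ`. -/
theorem hom_shift_ne_zero_of_support_intersect
    (R : Type u) [CommRing R] [IsNoetherianRing R]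
    [HasDerivedCategory (ModuleCat.{u} R)]
    (M N : DerivedCategory (ModuleCat.{u} R))
    (hMb : ∃ a b : ℤ, ∀ i : ℤ, (i < a ∨ b < i) →
      IsZero ((DerivedCategory.homologyFunctor (ModuleCat.{u} R) i).obj M))
    (hNb : ∃ a b : ℤ, ∀ i : ℤ, (i < a ∨ b < i) →
      IsZero ((DerivedCategory.homologyFunctor (ModuleCat.{u} R) i).obj N))
    (hMfg : ∀ i : ℤ, Module.Finite R
      ((DerivedCategory.homologyFunctor (ModuleCat.{u} R) i).obj M))
    (hNfg : ∀ i : ℤ, Module.Finite R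
      ((DerivedCategory.homologyFunctor (ModuleCat.{u} R) i).obj N))
    (hsupp : (derivedSupport R M ∩ derivedSupport R N).Nonempty) :
    ∃ (i : ℤ) (φ : M ⟶ (shiftFunctor (DerivedCategory (ModuleCat.{u} R)) i).obj N),
      φ ≠ 0 := by
  by_contra! H
  have hM : IsBoundedFinite M := ⟨hMb, hMfg⟩
  have hN : IsBoundedFinite N := ⟨hNb, hNfg⟩
  have horth : ShiftOrthogonal M N := shiftOrthogonal_of_forall_shift_right H
  obtain ⟨p, hpM, hpN⟩ := hsupp
  obtain ⟨i, hi⟩ := Set.mem_iUnion.mp hpM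
  obtain ⟨j, hj⟩ := Set.mem_iUnion.mp hpN
  obtain ⟨m, hm, hpm⟩ := Ideal.exists_le_maximal p.asIdeal p.2.ne_top
  let q : PrimeSpectrum R := ⟨m, hm.isPrime⟩
  have hqM : q ∈ derivedSupport R M := Set.mem_iUnion_of_mem i (Module.mem_support_mono hpm hi)
  have hqN : q ∈ derivedSupport R N := Set.mem_iUnion_of_mem j (Module.mem_support_mono hpm hj)
  obtain ⟨s, hs⟩ := IsNoetherian.noetherian m
  have hsq : PrimeSpectrum.zeroLocus (s : Set R) = {q} := by
    rw [← PrimeSpectrum.zeroLocus_span, ← Ideal.submodule_span_eq, hs]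
    ext r
    rw [PrimeSpectrum.mem_zeroLocus, Set.mem_singleton_iff, PrimeSpectrum.ext_iff]
    exact ⟨fun h => (hm.eq_of_le r.2.ne_top h).symm, fun h => h.ge⟩
  obtain ⟨M', hM', hsM, hl, -⟩ := hM.exists_koszul s
  obtain ⟨N', hN', hsN, -, hr⟩ := hN.exists_koszul s
  rw [hsq, Set.inter_eq_right.mpr (Set.singleton_subset_iff.mpr hqM)] at hsM
  rw [hsq, Set.inter_eq_right.mpr (Set.singleton_subset_iff.mpr hqN)] at hsN
  exact not_shiftOrthogonal_of_derivedSupport_eq_singleton hM' hN' hsM hsN (hr _ (hl _ horth))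
end

section
/- Let R be a commutative Noetherian ring, and let M, N be objects of D^-(R-mod) (bounded above complexes with finitely generated cohomology) with Supp M ∩ Supp N ≠ ∅. Then M ⊗^L_R N ≠ 0 in the derived category. -/
open CategoryTheory CategoryTheory.Limits MonoidalCategory

variable (R : Type u) [CommRing R]

noncomputable instance : (curriedTensor (ModuleCat.{u} R)).Additive where
  map_add := by
    intros
    ext X : 2
    exact MonoidalPreadditive.add_whiskerRight ..

instance (M : ModuleCat.{u} R) : ((curriedTensor (ModuleCat.{u} R)).obj M).Additive where
  map_add := by
    intros
    exact MonoidalPreadditive.whiskerLeft_add ..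

/-- The tensor product of two cochain complexes of `R`-modules
(the total complex of the tensor-product bicomplex). -/
noncomputable abbrev tensorComplex (K L : CochainComplex (ModuleCat.{u} R) ℤ) :
    CochainComplex (ModuleCat.{u} R) ℤ :=
  HomologicalComplex.mapBifunctor K L (curriedTensor (ModuleCat.{u} R)) (ComplexShape.up ℤ)

/-- The support of a complex: the union of the supports of its cohomology modules. -/
noncomputable def complexSupport (K : CochainComplex (ModuleCat.{u} R) ℤ) :
    Set (PrimeSpectrum R) :=
  ⋃ i : ℤ, Module.support R (K.homology i)

/-- In a sequence of projective modules which vanishes in large degrees and is exact above degree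
`a`, the image of the differential out of degree `a` is projective. -/
lemma projective_range_of_exact_above {A : Type*} [Ring A] {C : ℤ → Type*}
    [∀ i, AddCommGroup (C i)] [∀ i, Module A (C i)] [∀ i, Module.Projective A (C i)]
    (d : ∀ i j, C i →ₗ[A] C j) {b : ℤ} (hb : ∀ i, b < i → Subsingleton (C i)) {a : ℤ}
    (hd : ∀ i, a ≤ i → Function.Exact (d i (i + 1)) (d (i + 1) (i + 2))) :
    Module.Projective A (LinearMap.range (d a (a + 1))) := by
  suffices h : ∀ n : ℕ, ∀ i, a ≤ i → b ≤ i + n →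
      Module.Projective A (LinearMap.range (d i (i + 1))) from
    h (b - a).toNat a le_rfl (by lia)
  intro n
  induction n with
  | zero =>
    intro i _ hi
    have := hb (i + 1) (by lia)
    infer_instance
  | succ n ih =>
    intro i hai hi
    have hp := ih (i + 1) (by lia) (by push_cast at hi; lia)
    have hi2 : i + 1 + 1 = i + 2 := by ring
    rw [hi2] at hp
    obtain ⟨s, hs⟩ := Module.projective_lifting_property
      (d (i + 1) (i + 2)).rangeRestrict LinearMap.id (LinearMap.surjective_rangeRestrict _)
    have hz (x : C (i + 1)) : d (i + 1) (i + 2) (s ((d (i + 1) (i + 2)).rangeRestrict x)) =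
        d (i + 1) (i + 2) x :=
      congrArg Subtype.val (LinearMap.congr_fun hs ((d (i + 1) (i + 2)).rangeRestrict x))
    refine Module.Projective.of_split (M := C (i + 1)) (Submodule.subtype _)
      (LinearMap.codRestrict _ (LinearMap.id - s ∘ₗ (d (i + 1) (i + 2)).rangeRestrict) fun x ↦
        (hd i hai _).1 (by simp [hz])) ?_
    ext x
    have hx : (d (i + 1) (i + 2)).rangeRestrict x = 0 := Subtype.ext ((hd i hai _).2 x.2)
    change x.1 - s ((d (i + 1) (i + 2)).rangeRestrict x) = x
    rw [hx, map_zero, sub_zero]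

/-- A linear map on the kernel of `d` with values in an `S`-local module extends to the whole
source when the localization of `d` has projective image. -/
lemma exists_extend_ker_of_projective_range {R : Type*} [CommRing R] (S : Submonoid R)
    {M N V : Type*} [AddCommGroup M] [Module R M] [AddCommGroup N] [Module R N]
    [AddCommGroup V] [Module R V]
    (hV : ∀ s : S, IsUnit (algebraMap R (Module.End R V) s)) (d : M →ₗ[R] N)
    [Module.Projective (Localization S) (LinearMap.range (LocalizedModule.map S d))]
    (ψ : LinearMap.ker d →ₗ[R] V) :
    ∃ f : M →ₗ[R] V, ∀ z : LinearMap.ker d, f z = ψ z := by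
  let D := LocalizedModule.map S d
  obtain ⟨s, hs⟩ := Module.projective_lifting_property D.rangeRestrict LinearMap.id
    (LinearMap.surjective_rangeRestrict _)
  have hz (x : LocalizedModule S M) : D (s (D.rangeRestrict x)) = D x :=
    congrArg Subtype.val (LinearMap.congr_fun hs (D.rangeRestrict x))
  let ι := LinearMap.toKerIsLocalized S (LocalizedModule.mkLinearMap S M)
    (LocalizedModule.mkLinearMap S N) d
  have hι : IsLocalizedModule S ι := LinearMap.toKerLocalized_isLocalizedModule (Localization S) ..
  let r := LinearMap.codRestrict (LinearMap.ker (IsLocalizedModule.map S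
    (LocalizedModule.mkLinearMap S M) (LocalizedModule.mkLinearMap S N) d))
    ((LinearMap.id - s ∘ₗ D.rangeRestrict).restrictScalars R)
    (fun x ↦ show D (x - s (D.rangeRestrict x)) = 0 by simp [hz])
  refine ⟨IsLocalizedModule.lift S ι ψ hV ∘ₗ r ∘ₗ LocalizedModule.mkLinearMap S M, fun z ↦ ?_⟩
  have hr : r (LocalizedModule.mkLinearMap S M z) = ι z := by
    have : D.rangeRestrict (LocalizedModule.mkLinearMap S M z) = 0 :=
      Subtype.ext (show D _ = 0 from (ι z).2)
    refine Subtype.ext ?_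
    change LocalizedModule.mkLinearMap S M z -
      s (D.rangeRestrict (LocalizedModule.mkLinearMap S M z)) = LocalizedModule.mkLinearMap S M z
    rw [this, map_zero, sub_zero]
  rw [LinearMap.comp_apply, LinearMap.comp_apply, hr, IsLocalizedModule.lift_apply]

/-- A finite module admits a nonzero map to the residue field at any point of its support. -/
lemma exists_linearMap_residueField_ne_zero {R : Type*} [CommRing R] {M : Type*} [AddCommGroup M]
    [Module R M] [Module.Finite R M] {p : PrimeSpectrum R} (hp : p ∈ Module.support R M) :
    ∃ (φ : M →ₗ[R] p.asIdeal.ResidueField) (m : M), φ m ≠ 0 := by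
  have := (Module.mem_support_iff_nontrivial_residueField_tensorProduct p).1 hp
  obtain ⟨v, hv⟩ := exists_ne (0 : TensorProduct R p.asIdeal.ResidueField M)
  by_contra! h
  refine hv ((Module.forall_dual_apply_eq_zero_iff p.asIdeal.ResidueField v).1 fun g ↦ ?_)
  suffices g = 0 by rw [this, LinearMap.zero_apply]
  refine TensorProduct.AlgebraTensorModule.curry_injective (LinearMap.ext_ring ?_)
  ext m
  exact h (g.restrictScalars R ∘ₗ TensorProduct.mk R p.asIdeal.ResidueField M 1) m

/-- The homology of a short complex of modules as a quotient of the kernel of the second map. -/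
lemma exists_ker_to_shortComplex_homology {R : Type u} [CommRing R]
    (S : ShortComplex (ModuleCat.{u} R)) :
    ∃ q : LinearMap.ker S.g.hom →ₗ[R] S.homology, Function.Surjective q ∧
      ∀ z, q z = 0 ↔ ∃ w, S.f w = z := by
  let e : S.homology ≃ₗ[R] LinearMap.ker S.g.hom ⧸ LinearMap.range S.moduleCatToCycles :=
    S.moduleCatHomologyIso.toLinearEquiv
  refine ⟨e.symm.toLinearMap ∘ₗ (LinearMap.range S.moduleCatToCycles).mkQ,
    e.symm.surjective.comp (Submodule.mkQ_surjective _), fun z ↦ ?_⟩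
  rw [LinearMap.comp_apply, LinearEquiv.coe_coe, LinearEquiv.map_eq_zero_iff, Submodule.mkQ_apply,
    Submodule.Quotient.mk_eq_zero]
  exact exists_congr fun w ↦ Subtype.ext_iff

/-- The cohomology of a complex of modules as a quotient of the kernel of the differential. -/
lemma exists_ker_to_homology {R : Type u} [CommRing R] (K : CochainComplex (ModuleCat.{u} R) ℤ)
    {i j k : ℤ} (hij : i + 1 = j) (hjk : j + 1 = k) :
    ∃ q : LinearMap.ker (K.d j k).hom →ₗ[R] K.homology j, Function.Surjective q ∧
      ∀ z, q z = 0 ↔ ∃ w, K.d i j w = z := by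
  obtain ⟨q, hq, hq0⟩ := exists_ker_to_shortComplex_homology (K.sc' i j k)
  let e := (K.homologyIsoSc' i j k (by simp [← hij]) (by simp [hjk])).symm.toLinearEquiv
  exact ⟨e.toLinearMap ∘ₗ q, e.surjective.comp hq, fun z ↦ e.map_eq_zero_iff.trans (hq0 z)⟩

/-- Outside the support of its cohomology in degree `j`, a complex becomes exact in degree `j`
after localization. -/
lemma exact_localizedModule_map_of_notMem_support {R : Type u} [CommRing R]
    (K : CochainComplex (ModuleCat.{u} R) ℤ) {i j k : ℤ} (hij : i + 1 = j) (hjk : j + 1 = k)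
    {p : PrimeSpectrum R} (hp : p ∉ Module.support R (K.homology j)) :
    Function.Exact (LocalizedModule.map p.asIdeal.primeCompl (K.d i j).hom)
      (LocalizedModule.map p.asIdeal.primeCompl (K.d j k).hom) := by
  obtain ⟨q, -, hq⟩ := exists_ker_to_homology K hij hjk
  refine fun y ↦ ⟨fun hy ↦ ?_, ?_⟩
  · induction y using LocalizedModule.induction_on with | _ x s
    rw [LocalizedModule.map_mk, ← LocalizedModule.zero_mk 1, LocalizedModule.mk_eq] at hy
    obtain ⟨t, ht⟩ := hy
    simp only [smul_zero, one_smul] at ht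
    have hx : (t : R) • x ∈ LinearMap.ker (K.d j k).hom := by
      rw [LinearMap.mem_ker, map_smul]
      exact ht
    obtain ⟨r, hr, hrx⟩ := Module.notMem_support_iff'.1 hp (q ⟨_, hx⟩)
    rw [← map_smul, hq] at hrx
    obtain ⟨w, hw⟩ := hrx
    let r' : p.asIdeal.primeCompl := ⟨r, hr⟩
    refine ⟨LocalizedModule.mk w (r' * t * s), ?_⟩
    rw [LocalizedModule.map_mk, show (K.d i j).hom w = (r' * t) • x by
      rw [mul_smul]; exact hw, LocalizedModule.mk_cancel_common_left]
  · rintro ⟨w, rfl⟩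
    induction w using LocalizedModule.induction_on with | _ x s
    rw [LocalizedModule.map_mk, LocalizedModule.map_mk, ← ModuleCat.comp_apply, K.d_comp_d]
    exact LocalizedModule.zero_mk s

/-- A bounded above complex of projectives with finite cohomology having `p` in its support admits
a cocycle with values in the residue field at `p` which does not vanish on some cycle. -/
lemma exists_cocycle_residueField {R : Type u} [CommRing R]
    (P : CochainComplex (ModuleCat.{u} R) ℤ) (hfg : ∀ i, Module.Finite R (P.homology i))
    (hP : ∀ i, Projective (P.X i)) (hPb : ∃ b : ℤ, ∀ i, b < i → IsZero (P.X i))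
    {p : PrimeSpectrum R} (hp : p ∈ complexSupport R P) :
    ∃ φ : ∀ i, P.X i →ₗ[R] p.asIdeal.ResidueField, (∀ i j x, φ j (P.d i j x) = 0) ∧
      ∃ (a : ℤ) (x : P.X a), (∀ j, P.d a j x = 0) ∧ φ a x ≠ 0 := by
  obtain ⟨b, hb⟩ := hPb
  have hsub (i : ℤ) (hi : b < i) : Subsingleton (P.X i) := ModuleCat.subsingleton_of_isZero (hb i hi)
  obtain ⟨a, ha, hmax⟩ : ∃ a, p ∈ Module.support R (P.homology a) ∧
      ∀ i, p ∈ Module.support R (P.homology i) → i ≤ a := by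
    refine Int.exists_greatest_of_bdd ⟨b, fun i hi ↦ ?_⟩ (by simpa [complexSupport] using hp)
    by_contra! hlt
    obtain ⟨q, hq, -⟩ := exists_ker_to_homology P (sub_add_cancel i 1) rfl
    have := hsub i hlt
    have := hq.subsingleton
    simp [Module.support_eq_empty] at hi
  obtain ⟨φ, m, hm⟩ := exists_linearMap_residueField_ne_zero ha
  obtain ⟨q, hq, hq0⟩ := exists_ker_to_homology P (sub_add_cancel a 1) rfl
  obtain ⟨x, rfl⟩ := hq m
  let S := p.asIdeal.primeCompl
  have (i : ℤ) : Module.Projective R (P.X i) := (IsProjective.iff_projective _).2 (hP i)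
  have := projective_range_of_exact_above (A := Localization S)
    (C := fun i ↦ LocalizedModule S (P.X i)) (fun i j ↦ LocalizedModule.map S (P.d i j).hom)
    (b := b) (a := a) (fun i hi ↦ have := hsub i hi; inferInstance)
    (fun i hi ↦ exact_localizedModule_map_of_notMem_support P rfl (by ring)
      fun h ↦ by have := hmax _ h; lia)
  obtain ⟨f, hf⟩ := exists_extend_ker_of_projective_range S
    (V := p.asIdeal.ResidueField) (fun s ↦ by
      rw [← (Algebra.lmul R p.asIdeal.ResidueField).commutes]
      refine (IsUnit.mk0 _ ?_).map _
      rw [Ne, Ideal.algebraMap_residueField_eq_zero]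
      exact s.2) (P.d a (a + 1)).hom (φ ∘ₗ q)
  have hfd (w) : f (P.d (a - 1) a w) = 0 := by
    have hw : P.d (a - 1) a w ∈ LinearMap.ker (P.d a (a + 1)).hom := by
      rw [LinearMap.mem_ker, ← ModuleCat.comp_apply, P.d_comp_d]; rfl
    rw [hf ⟨_, hw⟩, LinearMap.comp_apply, (hq0 _).2 ⟨w, rfl⟩, map_zero]
  refine ⟨Pi.single a f, fun i j y ↦ ?_, a, x, fun j ↦ ?_, ?_⟩
  · rcases eq_or_ne j a with rfl | hj
    · rw [Pi.single_eq_same]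
      by_cases hij : i + 1 = j
      · obtain rfl : i = j - 1 := by lia
        exact hfd y
      · rw [P.shape i j hij]
        exact map_zero f
    · rw [Pi.single_eq_of_ne hj]; rfl
  · by_cases hij : a + 1 = j
    · subst hij; exact x.2
    · rw [P.shape a j hij]; rfl
  · rw [Pi.single_eq_same, hf]
    exact hm

/-- Cocycles on `P` and `Q` with values in a field which do not vanish on given cycles
yield nonzero cohomology of `P ⊗ Q`. -/
lemma not_isZero_homology_tensorComplex {R : Type u} [CommRing R] {k : Type u} [Field k]
    [Algebra R k] {P Q : CochainComplex (ModuleCat.{u} R) ℤ}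
    (φ : ∀ i, P.X i →ₗ[R] k) (hφ : ∀ i j x, φ j (P.d i j x) = 0)
    (ψ : ∀ i, Q.X i →ₗ[R] k) (hψ : ∀ i j x, ψ j (Q.d i j x) = 0)
    {a b : ℤ} {x : P.X a} (hx : ∀ j, P.d a j x = 0) (hφx : φ a x ≠ 0)
    {y : Q.X b} (hy : ∀ j, Q.d b j y = 0) (hψy : ψ b y ≠ 0) :
    ¬ IsZero ((tensorComplex R P Q).homology (a + b)) := by
  intro h
  let F : (tensorComplex R P Q).X (a + b) ⟶ ModuleCat.of R k :=
    HomologicalComplex.mapBifunctorDesc fun i j _ ↦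
      ModuleCat.ofHom (TensorProduct.lift ((LinearMap.mul R k).compl₁₂ (φ i) (ψ j)))
  have hF (i j h) (u : P.X i) (v : Q.X j) :
      F (HomologicalComplex.ιMapBifunctor P Q (curriedTensor (ModuleCat.{u} R)) (.up ℤ) i j
        (a + b) h (u ⊗ₜ[R] v)) = φ i u * ψ j v := by
    rw [← ModuleCat.comp_apply, HomologicalComplex.ι_mapBifunctorDesc]
    rfl
  have hdF : (tensorComplex R P Q).d (a + b - 1) (a + b) ≫ F = 0 := by
    refine HomologicalComplex.mapBifunctor.hom_ext fun i j hij ↦ ?_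
    have hij' : i + j = a + b - 1 := hij
    rw [HomologicalComplex.mapBifunctor.d_eq, Preadditive.add_comp, Preadditive.comp_add,
      HomologicalComplex.mapBifunctor.ι_D₁_assoc, HomologicalComplex.mapBifunctor.ι_D₂_assoc,
      HomologicalComplex.mapBifunctor.d₁_eq _ _ _ _ (rfl : i + 1 = i + 1) j _
        (show i + 1 + j = a + b by lia),
      HomologicalComplex.mapBifunctor.d₂_eq _ _ _ _ i (rfl : j + 1 = j + 1) _
        (show i + (j + 1) = a + b by lia), Linear.units_smul_comp, Linear.units_smul_comp,
      Category.assoc, Category.assoc, comp_zero]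
    have h₁ : (((curriedTensor (ModuleCat.{u} R)).map (P.d i (i + 1))).app (Q.X j) ≫
        HomologicalComplex.ιMapBifunctor P Q (curriedTensor (ModuleCat.{u} R)) (.up ℤ) (i + 1) j
          (a + b) (show i + 1 + j = a + b by lia) ≫ F) = 0 := by
      refine ModuleCat.hom_ext (TensorProduct.ext' fun u v ↦ ?_)
      refine (hF (i + 1) j _ (P.d i (i + 1) u) v).trans ?_
      rw [hφ, zero_mul]
      rfl
    have h₂ : (((curriedTensor (ModuleCat.{u} R)).obj (P.X i)).map (Q.d j (j + 1)) ≫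
        HomologicalComplex.ιMapBifunctor P Q (curriedTensor (ModuleCat.{u} R)) (.up ℤ) i (j + 1)
          (a + b) (show i + (j + 1) = a + b by lia) ≫ F) = 0 := by
      refine ModuleCat.hom_ext (TensorProduct.ext' fun u v ↦ ?_)
      refine (hF i (j + 1) _ u (Q.d j (j + 1) v)).trans ?_
      rw [hψ, mul_zero]
      rfl
    rw [h₁, h₂, smul_zero, smul_zero, add_zero]
  have hι : (tensorComplex R P Q).d (a + b) (a + b + 1)
      (HomologicalComplex.ιMapBifunctor P Q (curriedTensor (ModuleCat.{u} R)) (.up ℤ) a b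
        (a + b) rfl (x ⊗ₜ[R] y)) = 0 := by
    rw [HomologicalComplex.mapBifunctor.d_eq, ← ModuleCat.comp_apply, Preadditive.comp_add,
      HomologicalComplex.mapBifunctor.ι_D₁, HomologicalComplex.mapBifunctor.ι_D₂,
      HomologicalComplex.mapBifunctor.d₁_eq _ _ _ _ (rfl : a + 1 = a + 1) b _
        (show a + 1 + b = a + b + 1 by lia),
      HomologicalComplex.mapBifunctor.d₂_eq _ _ _ _ a (rfl : b + 1 = b + 1) _
        (show a + (b + 1) = a + b + 1 by lia)]
    have h₁ : ((curriedTensor (ModuleCat.{u} R)).map (P.d a (a + 1))).app (Q.X b) (x ⊗ₜ[R] y) =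
        0 := by
      change P.d a (a + 1) x ⊗ₜ[R] y = 0
      rw [hx, TensorProduct.zero_tmul]
    have h₂ : ((curriedTensor (ModuleCat.{u} R)).obj (P.X a)).map (Q.d b (b + 1)) (x ⊗ₜ[R] y) =
        0 := by
      change x ⊗ₜ[R] Q.d b (b + 1) y = 0
      rw [hy, TensorProduct.tmul_zero]
    simp only [ModuleCat.hom_add, LinearMap.add_apply, Units.smul_def, ModuleCat.hom_zsmul,
      LinearMap.smul_apply, ModuleCat.comp_apply]
    rw [h₁, h₂, map_zero, map_zero, smul_zero, smul_zero, add_zero]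
  obtain ⟨q, -, hq⟩ := exists_ker_to_homology (tensorComplex R P Q) (sub_add_cancel (a + b) 1) rfl
  have := ModuleCat.subsingleton_of_isZero h
  obtain ⟨w, hw⟩ := (hq ⟨_, hι⟩).1 (Subsingleton.elim _ _)
  have hFw : F ((tensorComplex R P Q).d (a + b - 1) (a + b) w) = 0 := by
    rw [← ModuleCat.comp_apply, hdF]; rfl
  rw [hw, hF] at hFw
  exact mul_ne_zero hφx hψy hFw

/-- Let `R` be commutative Noetherian and let `M`, `N` be cohomologically bounded-above
complexes with finitely generated cohomology modules and `Supp M ∩ Supp N ≠ ∅`. Then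
`M ⊗^L_R N ≠ 0`: for any bounded-above complexes of projectives `P`, `Q` quasi-isomorphic
to `M`, `N`, the complex `P ⊗ Q` (computing the derived tensor product) has nonzero
cohomology in some degree. -/
theorem derived_tensor_ne_zero_of_support_intersect
    [IsNoetherianRing R]
    (M N P Q : CochainComplex (ModuleCat.{u} R) ℤ)
    (hMb : ∃ b : ℤ, ∀ i : ℤ, b < i → IsZero (M.homology i))
    (hNb : ∃ b : ℤ, ∀ i : ℤ, b < i → IsZero (N.homology i))
    (hMfg : ∀ i : ℤ, Module.Finite R (M.homology i))
    (hNfg : ∀ i : ℤ, Module.Finite R (N.homology i))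
    (hP : ∀ i : ℤ, Projective (P.X i)) (hPb : ∃ b : ℤ, ∀ i : ℤ, b < i → IsZero (P.X i))
    (hQ : ∀ i : ℤ, Projective (Q.X i)) (hQb : ∃ b : ℤ, ∀ i : ℤ, b < i → IsZero (Q.X i))
    (πP : P ⟶ M) (hπP : QuasiIso πP) (πQ : Q ⟶ N) (hπQ : QuasiIso πQ)
    (hsupp : (complexSupport R M ∩ complexSupport R N).Nonempty) :
    ∃ i : ℤ, ¬ IsZero ((tensorComplex R P Q).homology i) := by
  obtain ⟨p, hpM, hpN⟩ := hsupp
  have eP (i : ℤ) : P.homology i ≅ M.homology i := asIso (HomologicalComplex.homologyMap πP i)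
  have eQ (i : ℤ) : Q.homology i ≅ N.homology i := asIso (HomologicalComplex.homologyMap πQ i)
  have hpP : p ∈ complexSupport R P := by
    simpa only [complexSupport, (eP _).toLinearEquiv.support_eq] using hpM
  have hpQ : p ∈ complexSupport R Q := by
    simpa only [complexSupport, (eQ _).toLinearEquiv.support_eq] using hpN
  obtain ⟨φ, hφ, a, x, hx, hφx⟩ := exists_cocycle_residueField P
    (fun i ↦ Module.Finite.equiv (eP i).toLinearEquiv.symm) hP hPb hpP
  obtain ⟨ψ, hψ, b, y, hy, hψy⟩ := exists_cocycle_residueField Q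
    (fun i ↦ Module.Finite.equiv (eQ i).toLinearEquiv.symm) hQ hQb hpQ
  exact ⟨a + b, not_isZero_homology_tensorComplex φ hφ ψ hψ hx hφx hy hψy⟩
end
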